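/- There exists an integer g₀ such that the following holds. Let (G_n)_{n≥1} be a sequence of cubic (3-regular) graphs with girth(G_1) ≥ g₀, girth(G_n) → ∞ as n → ∞, diam(G_n) ≤ (3/2)·girth(G_n) + 5 for every n ≥ 1, |E(G_n)| ≤ (3/2)·2^{(3·girth(G_n)+6)/4} for every n ≥ 1, and 1 < ⌊girth(G_n)/6⌋ < ⌊girth(G_{n+1})/6⌋ for every n ≥ 1. Then there exist a set S of size 96 with a fixed-point-free involution and a sequence of S-labellings of (G_n) satisfying the C'(1/6)-small cancellation property. -/

import Mathlib

open SimpleGraph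

/-- An `S`-labelling of `G` (with `inv` the formal-inverse involution on `S`):
`ℓ (x,y)` is the label of the ordered pair `(x,y)`, and `ℓ (y,x) = inv (ℓ (x,y))`
for adjacent pairs. -/
def IsGoodLabelling {V S : Type*} (G : SimpleGraph V) (inv : S → S) (ℓ : V → V → S) : Prop :=
  ∀ x y, G.Adj x y → ℓ y x = inv (ℓ x y)

/-- The labelling `ℓ` is reduced: distinct neighbours of a vertex get distinct labels. -/
def ReducedLabelling {V S : Type*} (G : SimpleGraph V) (ℓ : V → V → S) : Prop :=
  ∀ v u w, G.Adj v u → G.Adj v w → u ≠ w → ℓ v u ≠ ℓ v w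

/-- The word read along a walk. -/
def walkWord {V S : Type*} {G : SimpleGraph V} (ℓ : V → V → S) {u v : V} (p : G.Walk u v) :
    List S := p.darts.map (fun d => ℓ d.toProd.1 d.toProd.2)

/-- The `C'(lam)`-small cancellation property for a sequence of labellings of a
sequence of graphs: every labelling is a reduced `S`-labelling, and no word of length
at least `lam * girth (G i)` read along a path of `G i` appears as the word of a
different path in any graph of the sequence. -/
def SmallCancellation {ι : Type*} (V : ι → Type*) (G : ∀ i, SimpleGraph (V i)) {S : Type*}
    (inv : S → S) (ℓ : ∀ i, V i → V i → S) (lam : ℝ) : Prop :=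
  (∀ i, IsGoodLabelling (G i) inv (ℓ i)) ∧
  (∀ i, ReducedLabelling (G i) (ℓ i)) ∧
  ∀ (i j : ι) (u v : V i) (p : (G i).Walk u v) (x y : V j) (q : (G j).Walk x y),
    p.IsPath → q.IsPath →
    lam * ((G i).girth : ℝ) ≤ (p.length : ℝ) →
    walkWord (ℓ i) p = walkWord (ℓ j) q →
    (⟨i, u, v, p⟩ : Σ k, Σ a : V k, Σ b : V k, (G k).Walk a b) = ⟨j, x, y, q⟩

section RosenfeldSection
open Finset

def restr {E S : Type} [DecidableEq E] (s0 : S) (f : E → S) (Y : Finset E) : E → S :=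
  fun x => if x ∈ Y then f x else s0

theorem rosenfeld {E S ι : Type} [Fintype E] [DecidableEq E] [Fintype S] [DecidableEq S]
    [Fintype ι] (s0 : S) (hS : Fintype.card S = 96)
    (R : Finset E → (E → S) → Prop) (D sc : ι → Finset E) (Bad : ι → (E → S) → Prop)
    (hD : ∀ b, D b ⊆ sc b) (hne : ∀ b, (D b).Nonempty)
    (h0 : R ∅ (fun _ => s0))
    (h1 : ∀ X Y f, Y ⊆ X → R X f → R Y (restr s0 f Y))
    (h2 : ∀ b Y f, sc b ⊆ Y → (Bad b (restr s0 f Y) ↔ Bad b f))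
    (h3 : ∀ X e f, e ∉ X → R X f → ∃ Z : Finset S, Z.card ≤ 4 ∧
      ∀ s, s ∉ Z → R (insert e X) (Function.update f e s))
    (h4 : ∀ b X f f', R X f → R X f' → sc b ⊆ X → Bad b f → Bad b f' →
      (∀ x, x ∉ D b → f x = f' x) → f = f')
    (h5 : ∀ b e, e ∈ sc b → ∃ b', e ∈ D b' ∧ sc b' = sc b ∧ ∀ f, Bad b f → Bad b' f)
    (h6 : ∀ e, ∑ b with e ∈ D b, (91 : ℝ) / 91 ^ (D b).card ≤ 1) :
    ∃ f, R univ f ∧ ∀ b, ¬ Bad b f := by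
  classical
  let Good : Finset E → (E → S) → Prop := fun X f =>
    (∀ x, x ∉ X → f x = s0) ∧ R X f ∧ ∀ b, sc b ⊆ X → ¬ Bad b f
  let N : Finset E → Finset (E → S) := fun X => univ.filter (Good X)
  have mono : ∀ X Y f, Y ⊆ X → Good X f → Good Y (restr s0 f Y) := by
    intro X Y f hYX hf
    refine ⟨fun x hx => by simp [restr, hx], h1 X Y f hYX hf.2.1, fun b hb hbad => ?_⟩
    exact hf.2.2 b (hb.trans hYX) ((h2 b Y f hb).1 hbad)
  have key : ∀ n : ℕ, ∀ X : Finset E, X.card = n → ∀ e, e ∉ X →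
      (91 : ℝ) * (N X).card ≤ (N (insert e X)).card := by
    intro n
    induction n using Nat.strong_induction_on with
    | _ n ih =>
    intro X hX e he
    have chain : ∀ W : Finset E, ∀ Y : Finset E, Disjoint Y W → Y ∪ W ⊆ X →
        (91 : ℝ) ^ W.card * (N Y).card ≤ (N (Y ∪ W)).card := by
      intro W
      induction W using Finset.induction_on with
      | empty => intro Y _ _; simp
      | insert a W ha ihW =>
        intro Y hd hs
        rw [Finset.disjoint_insert_right] at hd
        have hs' : Y ∪ W ⊆ X := by
          refine subset_trans ?_ hs
          exact union_subset_union_right (subset_insert _ _)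
        have hnot : a ∉ Y ∪ W := by simp [hd.1, ha]
        have haX : a ∈ X := hs (by simp)
        have hlt : (Y ∪ W).card < n := by
          rw [← hX]
          exact Finset.card_lt_card ⟨hs', fun h => hnot (h haX)⟩
        have := ih _ hlt (Y ∪ W) rfl a hnot
        have h2 := ihW Y hd.2 hs'
        rw [card_insert_of_notMem ha, union_insert, pow_succ]
        nlinarith
    -- the reduced extensions
    let A : Finset (E → S) := univ.filter (fun g =>
      Good X (restr s0 g X) ∧ (∀ x, x ∉ insert e X → g x = s0) ∧ R (insert e X) g)
    have hA : 92 * (N X).card ≤ A.card := by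
      have : ∀ f ∈ N X, 92 ≤ (A.filter (fun g => restr s0 g X = f)).card := by
        intro f hf
        have hf' : Good X f := (mem_filter.1 hf).2
        obtain ⟨Z, hZ, hZ'⟩ := h3 X e f he hf'.2.1
        have hc : 92 ≤ (univ \ Z).card := by
          rw [card_sdiff_of_subset (subset_univ _), card_univ, hS]; omega
        refine hc.trans ?_
        refine card_le_card_of_injOn (fun s => Function.update f e s) ?_ ?_
        · intro s hs
          have hs : s ∉ Z := by simpa using hs
          have hr : restr s0 (Function.update f e s) X = f := by
            funext x
            by_cases hx : x ∈ X
            · have : x ≠ e := fun h => he (h ▸ hx)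
              simp [restr, hx, this]
            · simp [restr, hx, hf'.1 x hx]
          simp only [coe_filter, Set.mem_ofPred_eq, A, mem_filter, mem_univ, true_and]
          refine ⟨⟨by rw [hr]; exact hf', ?_, hZ' s hs⟩, hr⟩
          intro x hx
          simp only [mem_insert, not_or] at hx
          simp [hx.1, hf'.1 x hx.2]
        · intro s _ s' _ h
          have := congrFun h e
          simpa using this
      have h2 := card_nsmul_le_sum (N X) _ 92 this
      rw [← card_eq_sum_card_fiberwise (f := fun g => restr s0 g X) (s := A) (t := N X)] at h2
      · simpa [mul_comm] using h2
      · intro g hg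
        have := (mem_filter.1 hg).2.1
        simp [N, this]
    let I : Finset ι := univ.filter (fun b => e ∈ D b)
    let J : Finset ι := I.filter (fun b => sc b ⊆ insert e X)
    have hcov : A ⊆ N (insert e X) ∪ J.biUnion (fun b => A.filter (fun g => Bad b g)) := by
      intro g hg
      have hg' := (mem_filter.1 hg).2
      by_cases hG : Good (insert e X) g
      · simp [N, hG]
      · have : ∃ b, sc b ⊆ insert e X ∧ Bad b g := by
          by_contra hno
          push Not at hno
          exact hG ⟨hg'.2.1, hg'.2.2, hno⟩
        obtain ⟨b, hb, hbad⟩ := this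
        have heb : e ∈ sc b := by
          by_contra hn
          have hbX : sc b ⊆ X := by
            intro x hx
            rcases mem_insert.1 (hb hx) with h | h
            · exact absurd (h ▸ hx) hn
            · exact h
          exact hg'.1.2.2 b hbX ((h2 b X g hbX).2 hbad)
        obtain ⟨b', hb', hsc, himp⟩ := h5 b e heb
        refine mem_union_right _ (mem_biUnion.2 ⟨b', ?_, mem_filter.2 ⟨hg, himp g hbad⟩⟩)
        simp [J, I, hb', hsc, hb]
    have hAb : ∀ b ∈ J, ((A.filter (fun g => Bad b g)).card : ℝ) ≤
        91 / 91 ^ (D b).card * (N X).card := by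
      intro b hb
      have hb1 : e ∈ D b := by
        have := (mem_filter.1 hb).1
        exact (mem_filter.1 this).2
      have hb2 : sc b ⊆ insert e X := (mem_filter.1 hb).2
      have hc1 : (A.filter (fun g => Bad b g)).card ≤ (N (X \ D b)).card := by
        refine card_le_card_of_injOn (fun g => restr s0 g (X \ D b)) ?_ ?_
        · intro g hg
          have hg1 := (mem_filter.1 (mem_filter.1 hg).1).2
          have := mono X (X \ D b) _ sdiff_subset hg1.1
          have he : restr s0 (restr s0 g X) (X \ D b) = restr s0 g (X \ D b) := by
            funext x
            by_cases h1 : x ∈ X <;> by_cases h2 : x ∈ D b <;> simp [restr, h1, h2]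
          rw [he] at this
          simp [N, this]
        · intro g hg g' hg' hgg
          have hg1 := (mem_filter.1 (mem_filter.1 hg).1).2
          have hg1' := (mem_filter.1 (mem_filter.1 hg').1).2
          refine h4 b (insert e X) g g' hg1.2.2 hg1'.2.2 hb2 (mem_filter.1 hg).2
            (mem_filter.1 hg').2 ?_
          intro x hx
          by_cases hxX : x ∈ X
          · have := congrFun hgg x
            simpa [restr, hx, hxX] using this
          · have hxe : x ∉ insert e X := by
              rw [mem_insert, not_or]; exact ⟨fun h => hx (h ▸ hb1), hxX⟩
            rw [hg1.2.1 x hxe, hg1'.2.1 x hxe]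
      have hsub : (X \ D b) ∪ (D b).erase e ⊆ X := by
        intro x hx
        rcases mem_union.1 hx with h | h
        · exact (mem_sdiff.1 h).1
        · have h' := mem_erase.1 h
          exact (mem_insert.1 (hb2 (hD b h'.2))).resolve_left h'.1
      have hun : (X \ D b) ∪ (D b).erase e = X := by
        refine subset_antisymm hsub ?_
        intro x hx
        by_cases hxD : x ∈ D b
        · have : x ≠ e := fun h => he (h ▸ hx)
          simp [hxD, this]
        · simp [hx, hxD]
      have hch := chain ((D b).erase e) (X \ D b) (by
        rw [Finset.disjoint_left]; intro x hx hx'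
        exact (mem_sdiff.1 hx).2 (mem_erase.1 hx').2) hsub
      rw [hun] at hch
      have hcard : (D b).card = ((D b).erase e).card + 1 := (card_erase_add_one hb1).symm
      rw [hcard, pow_succ]
      have hpos : (0 : ℝ) < 91 ^ ((D b).erase e).card := by positivity
      have hc1' : ((A.filter (fun g => Bad b g)).card : ℝ) ≤ (N (X \ D b)).card := by
        exact_mod_cast hc1
      have : (91 : ℝ) / (91 ^ ((D b).erase e).card * 91) * (N X).card
          = (N X).card / 91 ^ ((D b).erase e).card := by field_simp
      rw [this, le_div_iff₀ hpos]
      nlinarith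
    have hsum : (A.card : ℝ) ≤ (N (insert e X)).card + (N X).card := by
      have h1 : A.card ≤ (N (insert e X)).card + ∑ b ∈ J, (A.filter (fun g => Bad b g)).card :=
        (card_le_card hcov).trans ((card_union_le _ _).trans
          (Nat.add_le_add_left card_biUnion_le _))
      have h2 : ∑ b ∈ J, ((A.filter (fun g => Bad b g)).card : ℝ) ≤ (N X).card := by
        calc _ ≤ ∑ b ∈ J, (91 : ℝ) / 91 ^ (D b).card * (N X).card := sum_le_sum hAb
          _ ≤ ∑ b ∈ I, (91 : ℝ) / 91 ^ (D b).card * (N X).card :=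
            sum_le_sum_of_subset_of_nonneg (filter_subset _ _) (fun _ _ _ => by positivity)
          _ = (∑ b ∈ I, (91 : ℝ) / 91 ^ (D b).card) * (N X).card := by rw [sum_mul]
          _ ≤ 1 * (N X).card := by
            have := h6 e
            gcongr
          _ = _ := one_mul _
      have h1' : (A.card : ℝ) ≤ (N (insert e X)).card +
          ∑ b ∈ J, ((A.filter (fun g => Bad b g)).card : ℝ) := by exact_mod_cast h1
      linarith
    have hA' : (92 : ℝ) * (N X).card ≤ A.card := by exact_mod_cast hA
    linarith
  have hpos : ∀ X : Finset E, 0 < (N X).card := by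
    intro X
    induction X using Finset.induction_on with
    | empty =>
      refine card_pos.2 ⟨fun _ => s0, ?_⟩
      simp only [N, mem_filter, mem_univ, true_and]
      refine ⟨fun _ _ => rfl, h0, fun b hb hbad => ?_⟩
      obtain ⟨x, hx⟩ := hne b
      exact absurd (hb (hD b hx)) (by simp)
    | insert a X ha ih =>
      have := key _ X rfl a ha
      have h : (0 : ℝ) < (N X).card := by exact_mod_cast ih
      have : (0 : ℝ) < (N (insert a X)).card := by linarith
      exact_mod_cast this
  obtain ⟨f, hf⟩ := card_pos.1 (hpos univ)
  have := (mem_filter.1 hf).2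
  exact ⟨f, this.2.1, fun b => this.2.2 b (subset_univ _)⟩

end RosenfeldSection

section Paths

/-- `P 0, …, P n` is a path of `G`. -/
def IsPth {V : Type} (G : SimpleGraph V) (n : ℕ) (P : ℕ → V) : Prop :=
  (∀ i, i < n → G.Adj (P i) (P (i + 1))) ∧ ∀ i j, i ≤ n → j ≤ n → P i = P j → i = j

theorem IsPth.le {V : Type} {G : SimpleGraph V} {n m : ℕ} {P : ℕ → V} (h : IsPth G n P)
    (hm : m ≤ n) : IsPth G m P :=
  ⟨fun i hi => h.1 i (by omega), fun i j hi hj => h.2 i j (by omega) (by omega)⟩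

/-- sub-path -/
theorem IsPth.shift {V : Type} {G : SimpleGraph V} {n a m : ℕ} {P : ℕ → V} (h : IsPth G n P)
    (hm : a + m ≤ n) : IsPth G m (fun i => P (a + i)) :=
  ⟨fun i hi => h.1 (a + i) (by omega), fun i j hi hj hij => by
    have := h.2 (a + i) (a + j) (by omega) (by omega) hij
    omega⟩

/-- reversed sub-path -/
theorem IsPth.rshift {V : Type} {G : SimpleGraph V} {n b m : ℕ} {P : ℕ → V} (h : IsPth G n P)
    (hm : m ≤ b) (hb : b ≤ n) : IsPth G m (fun i => P (b - i)) :=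
  ⟨fun i hi => by
    have := (h.1 (b - (i + 1)) (by omega)).symm
    rwa [show b - (i + 1) + 1 = b - i by omega] at this, fun i j hi hj hij => by
    have := h.2 (b - i) (b - j) (by omega) (by omega) hij
    omega⟩

theorem IsPth.exists_walk {V : Type} {G : SimpleGraph V} (n : ℕ) (P : ℕ → V)
    (h : IsPth G n P) : ∃ w : G.Walk (P 0) (P n), w.IsPath ∧ w.length = n ∧
      ∀ i, i ≤ n → w.getVert i = P i := by
  have : ∀ m, m ≤ n → ∃ w : G.Walk (P 0) (P m), w.length = m ∧
      ∀ i, i ≤ m → w.getVert i = P i := by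
    intro m
    induction m with
    | zero => intro _; exact ⟨SimpleGraph.Walk.nil, rfl, fun i hi => by
        obtain rfl : i = 0 := by omega
        rfl⟩
    | succ m ih =>
      intro hm
      obtain ⟨w, hw, hg⟩ := ih (by omega)
      refine ⟨w.concat (h.1 m (by omega)), by simp [hw], fun i hi => ?_⟩
      rw [SimpleGraph.Walk.concat_eq_append, SimpleGraph.Walk.getVert_append]
      split_ifs with hlt
      · exact hg i (by rw [hw] at hlt; omega)
      · rw [hw] at hlt
        have hi2 : i = m ∨ i = m + 1 := by omega
        rcases hi2 with rfl | rfl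
        · rw [hw, Nat.sub_self]; exact SimpleGraph.Walk.getVert_zero _
        · rw [hw, show m + 1 - m = 1 by omega]
          rfl
  obtain ⟨w, hw, hg⟩ := this n le_rfl
  refine ⟨w, ?_, hw, hg⟩
  rw [← SimpleGraph.Walk.IsPath.getVert_injOn_iff]
  intro i hi j hj hij
  simp only [Set.mem_ofPred_eq, hw] at hi hj
  rw [hg i hi, hg j hj] at hij
  exact h.2 i j hi hj hij

theorem pth_unique {V : Type} {H : SimpleGraph V} (hH : H.IsAcyclic) {n n' : ℕ} {P Q : ℕ → V}
    (hP : IsPth H n P) (hQ : IsPth H n' Q) (h0 : P 0 = Q 0) (h1 : P n = Q n') :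
    n = n' ∧ ∀ i, i ≤ n → P i = Q i := by
  obtain ⟨w, hw, hl, hg⟩ := hP.exists_walk
  obtain ⟨w', hw', hl', hg'⟩ := hQ.exists_walk
  have hw2 : (w'.copy h0.symm h1.symm).IsPath := by simpa using hw'
  have := (hH.subsingleton_path _ _).elim ⟨w, hw⟩ ⟨_, hw2⟩
  have he : w = w'.copy h0.symm h1.symm := congrArg Subtype.val this
  have hn : n = n' := by
    rw [← hl, ← hl', he]; simp
  refine ⟨hn, fun i hi => ?_⟩
  rw [← hg i hi, ← hg' i (by omega), he]; simp

theorem pth_dist {V : Type} {H : SimpleGraph V} (hH : H.IsAcyclic) {n : ℕ} {P : ℕ → V}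
    (hP : IsPth H n P) : ∀ i j, i ≤ n → j ≤ n →
      (i + H.dist (P i) (P j) = j ∨ j + H.dist (P i) (P j) = i) := by
  have key : ∀ i j, i ≤ j → j ≤ n → H.dist (P i) (P j) = j - i := by
    intro i j hij hj
    have hex := (hP.shift (a := i) (m := j - i) (by omega)).exists_walk
    have hij' : i + (j - i) = j := by omega
    simp only [Nat.add_zero] at hex
    rw [hij'] at hex
    obtain ⟨w, hw, hl, -⟩ := hex
    obtain ⟨w', hw', hl'⟩ := w.reachable.exists_path_of_dist
    have := (hH.subsingleton_path _ _).elim ⟨w, hw⟩ ⟨w', hw'⟩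
    have he : w = w' := congrArg Subtype.val this
    rw [← hl', ← he, hl]
  intro i j hi hj
  rcases le_total i j with h | h
  · rw [key i j h hj]; omega
  · rw [SimpleGraph.dist_comm, key j i h hi]; omega

/-- The union of two short paths is acyclic. -/
theorem union_acyclic {V : Type} {K : SimpleGraph V} {k : ℕ}
    (hcyc : ∀ v (c : K.Walk v v), c.IsCycle → 2 * k < c.length) {P Q : ℕ → V}
    (hP : IsPth K k P) (hQ : IsPth K k Q) :
    ∃ H : SimpleGraph V, H.IsAcyclic ∧ IsPth H k P ∧ IsPth H k Q := by
  classical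
  let F : Finset (Sym2 V) := (Finset.range k).image (fun i => s(P i, P (i + 1))) ∪
    (Finset.range k).image (fun i => s(Q i, Q (i + 1)))
  have hF : F.card ≤ 2 * k := by
    refine (Finset.card_union_le _ _).trans ?_
    have h1 := Finset.card_image_le (s := Finset.range k) (f := fun i => s(P i, P (i + 1)))
    have h2 := Finset.card_image_le (s := Finset.range k) (f := fun i => s(Q i, Q (i + 1)))
    simp only [Finset.card_range] at h1 h2
    omega
  have hsub : ∀ x y, s(x, y) ∈ F → K.Adj x y := by
    intro x y h
    rw [← SimpleGraph.mem_edgeSet]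
    simp only [F, Finset.mem_union, Finset.mem_image, Finset.mem_range] at h
    rcases h with ⟨i, hi, h⟩ | ⟨i, hi, h⟩
    · rw [← h]; exact hP.1 i hi
    · rw [← h]; exact hQ.1 i hi
  let H : SimpleGraph V := SimpleGraph.fromEdgeSet (F : Set (Sym2 V))
  have hle : H ≤ K := by
    intro x y h
    exact hsub x y (by simpa [H] using (SimpleGraph.fromEdgeSet_adj _ |>.1 h).1)
  refine ⟨H, ?_, ⟨fun i hi => ?_, hP.2⟩, ⟨fun i hi => ?_, hQ.2⟩⟩
  · intro v c hc
    have h1 := hcyc v (c.mapLe hle) (hc.mapLe hle)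
    rw [SimpleGraph.Walk.length_mapLe] at h1
    have h2 : c.edges.toFinset ⊆ F := by
      intro e he
      have := c.edges_subset_edgeSet (List.mem_toFinset.1 he)
      rw [SimpleGraph.edgeSet_fromEdgeSet] at this
      exact_mod_cast this.1
    have h3 := Finset.card_le_card h2
    rw [List.toFinset_card_of_nodup hc.edges_nodup, SimpleGraph.Walk.length_edges] at h3
    omega
  · rw [SimpleGraph.fromEdgeSet_adj]
    refine ⟨?_, (hP.1 i hi).ne⟩
    simp only [F, Finset.coe_union, Set.mem_union]
    left; simp only [Finset.coe_image, Set.mem_image, Finset.coe_range, Set.mem_Iio]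
    exact ⟨i, hi, rfl⟩
  · rw [SimpleGraph.fromEdgeSet_adj]
    refine ⟨?_, (hQ.1 i hi).ne⟩
    simp only [F, Finset.coe_union, Set.mem_union]
    right; simp only [Finset.coe_image, Set.mem_image, Finset.coe_range, Set.mem_Iio]
    exact ⟨i, hi, rfl⟩

/-- Propagation of equality of paths with the same word. -/
theorem pth_eq_of_dart {V S : Type} {K : SimpleGraph V} {inv : S → S} {L : V → V → S}
    (hg : IsGoodLabelling K inv L) (hr : ReducedLabelling K L) {n : ℕ} {P Q : ℕ → V}
    (hP : IsPth K n P) (hQ : IsPth K n Q)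
    (hw : ∀ t, t < n → L (P t) (P (t + 1)) = L (Q t) (Q (t + 1)))
    {t : ℕ} (ht : t ≤ n) (h0 : P t = Q t) : ∀ i, i ≤ n → P i = Q i := by
  have fwd : ∀ d, t + d ≤ n → P (t + d) = Q (t + d) := by
    intro d
    induction d with
    | zero => intro _; exact h0
    | succ d ih =>
      intro hd
      have e := ih (by omega)
      by_contra hne
      have h1 := hP.1 (t + d) (by omega)
      have h2 := hQ.1 (t + d) (by omega)
      rw [← e] at h2
      refine hr _ _ _ h1 h2 hne ?_
      have := hw (t + d) (by omega)
      rwa [← e] at this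
  have bwd : ∀ d, d ≤ t → P (t - d) = Q (t - d) := by
    intro d
    induction d with
    | zero => intro _; exact h0
    | succ d ih =>
      intro hd
      have e := ih (by omega)
      obtain ⟨m, hm⟩ : ∃ m, t - d = m + 1 := ⟨t - d - 1, by omega⟩
      rw [show t - (d + 1) = m by omega]
      rw [hm] at e
      by_contra hne
      have h1 := hP.1 m (by omega)
      have h2 := hQ.1 m (by omega)
      have hw' := hw m (by omega)
      rw [← e] at h2 hw'
      refine hr _ _ _ h1.symm h2.symm hne ?_
      rw [hg _ _ h1, hg _ _ h2, hw']
  intro i hi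
  rcases le_total t i with h | h
  · have := fwd (i - t) (by omega)
    rwa [show t + (i - t) = i by omega] at this
  · have := bwd (t - i) (by omega)
    rwa [show t - (t - i) = i by omega] at this

theorem det_lemma {V S : Type} {K : SimpleGraph V} {inv : S → S} (hinv : ∀ a, inv a ≠ a)
    {k : ℕ} (hcyc : ∀ v (c : K.Walk v v), c.IsCycle → 2 * k < c.length)
    {L L' : V → V → S} (hg : IsGoodLabelling K inv L) (hr : ReducedLabelling K L)
    (hg' : IsGoodLabelling K inv L') {P Q : ℕ → V}
    (hP : IsPth K k P) (hQ : IsPth K k Q) (hne : ∃ t, t ≤ k ∧ P t ≠ Q t)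
    (hw : ∀ t, t < k → L (P t) (P (t + 1)) = L (Q t) (Q (t + 1)))
    (hw' : ∀ t, t < k → L' (P t) (P (t + 1)) = L' (Q t) (Q (t + 1)))
    (hag : ∀ t, t < k → (∀ i, i < k → s(Q t, Q (t + 1)) ≠ s(P i, P (i + 1))) →
      L (Q t) (Q (t + 1)) = L' (Q t) (Q (t + 1))) :
    ∀ t, t < k → L (P t) (P (t + 1)) = L' (P t) (P (t + 1)) := by
  classical
  by_contra hcon
  push Not at hcon
  obtain ⟨H, hH, hPH, hQH⟩ := union_acyclic hcyc hP hQ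
  have dP := pth_dist hH hPH
  have dQ := pth_dist hH hQH
  let T := (Finset.range k).filter (fun t => L (P t) (P (t + 1)) ≠ L' (P t) (P (t + 1)))
  have hT : T.Nonempty := by
    obtain ⟨t, ht, h⟩ := hcon
    exact ⟨t, by simp [T, ht, h]⟩
  have hTk : ∀ t ∈ T, t < k := fun t ht => by
    have := (Finset.mem_filter.1 ht).1
    simpa using this
  have hσ : ∀ t ∈ T, ∃ t' ∈ T, s(Q t, Q (t + 1)) = s(P t', P (t' + 1)) := by
    intro t ht
    have htk := hTk t ht
    have hd := (Finset.mem_filter.1 ht).2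
    by_contra hno
    push Not at hno
    apply hd
    rw [hw t htk, hw' t htk]
    by_cases hex : ∃ i, i < k ∧ s(Q t, Q (t + 1)) = s(P i, P (i + 1))
    · obtain ⟨i, hi, he⟩ := hex
      have hiT : i ∉ T := fun h => hno i h he
      have hiL : L (P i) (P (i + 1)) = L' (P i) (P (i + 1)) := by
        by_contra h
        exact hiT (by simp [T, hi, h])
      rw [Sym2.eq_iff] at he
      rcases he with ⟨h1, h2⟩ | ⟨h1, h2⟩
      · rw [h1, h2, hiL]
      · rw [h1, h2, hg _ _ (hP.1 i hi), hg' _ _ (hP.1 i hi), hiL]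
    · push Not at hex
      exact hag t htk hex
  choose! σ hσT hσe using hσ
  have hinj : Set.InjOn σ T := by
    intro s hs t ht hst
    have hs' := hTk s hs
    have ht' := hTk t ht
    have h := (hσe s hs).trans ((congrArg (fun i => s(P i, P (i + 1))) hst).trans (hσe t ht).symm)
    rw [Sym2.eq_iff] at h
    rcases h with ⟨h1, _⟩ | ⟨h1, h2⟩
    · exact hQ.2 _ _ (by omega) (by omega) h1
    · have a1 := hQ.2 _ _ (by omega) (by omega) h1
      have a2 := hQ.2 _ _ (by omega) (by omega) h2
      omega
  have hsurj := Finset.surjOn_of_injOn_of_card_le σ (fun t ht => hσT t ht) hinj le_rfl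
  obtain ⟨sa, hsa, ha⟩ := hsurj (T.min'_mem hT)
  obtain ⟨sb, hsb, hb⟩ := hsurj (T.max'_mem hT)
  set a := T.min' hT
  set b := T.max' hT
  have haT : a ∈ T := T.min'_mem hT
  have hbT : b ∈ T := T.max'_mem hT
  have hak := hTk a haT
  have hbk := hTk b hbT
  have l1 : a ≤ sa := T.min'_le _ hsa
  have l2 : sa ≤ b := T.le_max' _ hsa
  have l3 : a ≤ sb := T.min'_le _ hsb
  have l4 : sb ≤ b := T.le_max' _ hsb
  have ea := hσe sa hsa
  have eb := hσe sb hsb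
  rw [ha] at ea
  rw [hb] at eb
  -- identity case
  have idcase : ∀ t, t < k → s(Q t, Q (t + 1)) = s(P t, P (t + 1)) → False := by
    intro t ht h
    rw [Sym2.eq_iff] at h
    rcases h with ⟨h1, h2⟩ | ⟨h1, h2⟩
    · obtain ⟨i, hi, hi'⟩ := hne
      exact hi' (pth_eq_of_dart hg hr hP hQ hw (t := t) (by omega) h1.symm i hi)
    · have := hw t ht
      rw [h1, h2, hg _ _ (hP.1 t ht)] at this
      exact hinv _ this.symm
  by_cases hsaa : sa = a
  · rw [hsaa] at ea
    exact idcase a hak ea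
  -- reversal case
  have hrev : sa = b ∧ sb = a ∧ Q a = P (b + 1) ∧ Q (b + 1) = P a := by
    have hab : a < b := by omega
    have q1 := dQ sa sb (by omega) (by omega)
    have q2 := dQ sa (sb + 1) (by omega) (by omega)
    have q3 := dQ (sa + 1) sb (by omega) (by omega)
    have q4 := dQ (sa + 1) (sb + 1) (by omega) (by omega)
    have p1 := dP a b (by omega) (by omega)
    have p2 := dP a (b + 1) (by omega) (by omega)
    have p3 := dP (a + 1) b (by omega) (by omega)
    have p4 := dP (a + 1) (b + 1) (by omega) (by omega)
    rw [Sym2.eq_iff] at ea eb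
    rcases ea with ⟨a1, a2⟩ | ⟨a1, a2⟩ <;> rcases eb with ⟨b1, b2⟩ | ⟨b1, b2⟩ <;>
    rw [a1, b1] at q1 <;> rw [a1, b2] at q2 <;> rw [a2, b1] at q3 <;> rw [a2, b2] at q4 <;>
    first
    | (exfalso; omega)
    | exact ⟨by omega, by omega, by rw [← b1]; congr 1; omega, by rw [← a2]; congr 1; omega⟩
  obtain ⟨-, hsb', hQa, hQb⟩ := hrev
  have hab : a < b := by omega
  have hun := pth_unique hH (hQH.shift (a := a) (m := b + 1 - a) (by omega))
    (hPH.rshift (b := b + 1) (m := b + 1 - a) (by omega) (by omega)) (by simpa using hQa)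
    (by simp only [show a + (b + 1 - a) = b + 1 by omega, show b + 1 - (b + 1 - a) = a by omega]
        exact hQb)
  have hmid := hun.2
  -- middle
  obtain ⟨d, hd⟩ : ∃ d, b - a = 2 * d ∨ b - a = 2 * d + 1 := ⟨(b - a) / 2, by omega⟩
  rcases hd with hd | hd
  · have m1 := hmid d (by omega)
    have m2 := hmid (d + 1) (by omega)
    simp only [← Nat.add_assoc, show b + 1 - d = a + d + 1 by omega,
      show b + 1 - (d + 1) = a + d by omega] at m1 m2
    exact idcase (a + d) (by omega) (by rw [m1, m2]; exact Sym2.eq_swap)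
  · have m1 := hmid d (by omega)
    have m2 := hmid (d + 1) (by omega)
    simp only [← Nat.add_assoc, show b + 1 - d = a + d + 1 + 1 by omega,
      show b + 1 - (d + 1) = a + d + 1 by omega] at m1 m2
    have h1 := hw (a + d) (by omega)
    rw [m1, m2] at h1
    have adj1 := hP.1 (a + d) (by omega)
    have adj2 := hP.1 (a + d + 1) (by omega)
    have hneq : P (a + d) ≠ P (a + d + 1 + 1) := by
      intro h
      have := hP.2 _ _ (by omega) (by omega) h
      omega
    refine hr _ _ _ adj1.symm adj2 hneq ?_
    rw [hg _ _ adj1, h1, ← hg _ _ adj2.symm]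

end Paths

section Counting

/-- Evaluate a finite sequence at a natural number. -/
def ev {V : Type} {k : ℕ} (P : Fin (k + 1) → V) (n : ℕ) : V := P (Fin.ofNat (k + 1) n)

theorem ev_ext {V : Type} {k : ℕ} {P Q : Fin (k + 1) → V} (h : ∀ i, i ≤ k → ev P i = ev Q i) :
    P = Q := by
  funext i
  have := h i (by omega)
  simpa [ev] using this

theorem ev_of {V : Type} {k : ℕ} (P : ℕ → V) {i : ℕ} (hi : i ≤ k) :
    ev (fun j : Fin (k + 1) => P j) i = P i := by
  simp [ev, Nat.mod_eq_of_lt (show i < k + 1 by omega)]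

/-- The type of paths of length `k`. -/
abbrev PathT {V : Type} (G : SimpleGraph V) (k : ℕ) : Type :=
  {P : Fin (k + 1) → V // IsPth G k (ev P)}

noncomputable instance {V : Type} [Fintype V] (G : SimpleGraph V) (k : ℕ) :
    Fintype (PathT G k) := Fintype.ofFinite _

theorem IsPth.ev_of {V : Type} {G : SimpleGraph V} {k : ℕ} {P : ℕ → V} (h : IsPth G k P) :
    IsPth G k (ev (fun j : Fin (k + 1) => P j)) := by
  constructor
  · intro i hi
    rw [_root_.ev_of P (by omega), _root_.ev_of P (by omega)]
    exact h.1 i hi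
  · intro i j hi hj
    rw [_root_.ev_of P hi, _root_.ev_of P hj]
    exact h.2 i j hi hj

/-- The set of edges of a path. -/
noncomputable def edg {V : Type} {G : SimpleGraph V} {k : ℕ} (P : PathT G k) :
    Finset (Sym2 V) := by
  classical
  exact (Finset.range k).image (fun i => s(ev P.1 i, ev P.1 (i + 1)))

theorem mem_edg {V : Type} {G : SimpleGraph V} {k : ℕ} (P : PathT G k) (e : Sym2 V) :
    e ∈ edg P ↔ ∃ i, i < k ∧ s(ev P.1 i, ev P.1 (i + 1)) = e := by
  simp [edg]

theorem card_edg {V : Type} {G : SimpleGraph V} {k : ℕ} (P : PathT G k) :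
    (edg P).card = k := by
  classical
  unfold edg
  rw [Finset.card_image_of_injOn, Finset.card_range]
  intro i hi j hj h
  simp only [Finset.coe_range, Set.mem_Iio] at hi hj
  simp only [Sym2.eq_iff] at h
  rcases h with ⟨h1, _⟩ | ⟨h1, h2⟩
  · exact P.2.2 _ _ (by omega) (by omega) h1
  · have a1 := P.2.2 _ _ (by omega) (by omega) h1
    have a2 := P.2.2 _ _ (by omega) (by omega) h2
    omega

theorem exists_bits {V : Type} [Fintype V] (G : SimpleGraph V) [DecidableRel G.Adj]
    (hG : G.IsRegularOfDegree 3) : ∃ b : V → V → V → Bool, ∀ u v w w', G.Adj v u →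
      G.Adj v w → G.Adj v w' → w ≠ u → w' ≠ u → b u v w = b u v w' → w = w' := by
  classical
  have : ∀ u v, ∃ b : V → Bool, ∀ w w', G.Adj v u →
      G.Adj v w → G.Adj v w' → w ≠ u → w' ≠ u → b w = b w' → w = w' := by
    intro u v
    by_cases h : ∃ w0, G.Adj v w0 ∧ w0 ≠ u
    · obtain ⟨w0, h0, h0u⟩ := h
      refine ⟨fun w => decide (w = w0), fun w w' hu hw hw' hwu hwu' hb => ?_⟩
      simp only [decide_eq_decide] at hb
      by_cases hw0 : w = w0
      · rw [hw0, hb.1 hw0]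
      · by_contra hne
        have hw0' : w' ≠ w0 := fun h => hw0 (hb.2 h)
        have hsub : ({u, w0, w, w'} : Finset V) ⊆ G.neighborFinset v := by
          intro x hx
          simp only [Finset.mem_insert, Finset.mem_singleton] at hx
          rw [SimpleGraph.mem_neighborFinset]
          rcases hx with rfl | rfl | rfl | rfl <;> assumption
        have hc := Finset.card_le_card hsub
        rw [SimpleGraph.card_neighborFinset_eq_degree, hG v] at hc
        have h4 : ({u, w0, w, w'} : Finset V).card = 4 := by
          rw [Finset.card_insert_of_notMem, Finset.card_insert_of_notMem,
            Finset.card_insert_of_notMem, Finset.card_singleton]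
          · simpa using hne
          · simp [Ne.symm hw0', Ne.symm (a := w) hw0]
          · simp [Ne.symm h0u, Ne.symm hwu, Ne.symm hwu']
        omega
    · exact ⟨fun _ => true, fun w w' hu hw hw' hwu hwu' hb => absurd ⟨w, hw, hwu⟩ h⟩
  choose b hb using this
  exact ⟨b, hb⟩

open Classical in
theorem count_dart {V : Type} [Fintype V] (G : SimpleGraph V) [DecidableRel G.Adj]
    (hG : G.IsRegularOfDegree 3) {k t : ℕ} (ht : t < k) (x y : V) :
    (Finset.univ.filter (fun P : PathT G k => ev P.1 t = x ∧ ev P.1 (t + 1) = y)).card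
      ≤ 2 ^ (k + 1) := by
  obtain ⟨b, hb⟩ := exists_bits G hG
  have hc : (Finset.univ : Finset (Fin (k + 1) → Bool)).card = 2 ^ (k + 1) := by simp
  rw [← hc]
  refine Finset.card_le_card_of_injOn (fun P => fun i : Fin (k + 1) =>
    if (i : ℕ) ≤ t then b (ev P.1 (i + 1)) (ev P.1 i) (ev P.1 (i - 1))
    else b (ev P.1 (i - 1)) (ev P.1 i) (ev P.1 (i + 1))) (fun _ _ => by simp) ?_
  intro P hP Q hQ hPQ
  have hP' := (Finset.mem_filter.1 hP).2
  have hQ' := (Finset.mem_filter.1 hQ).2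
  have hbit : ∀ i, i ≤ k →
    (if i ≤ t then b (ev P.1 (i + 1)) (ev P.1 i) (ev P.1 (i - 1))
    else b (ev P.1 (i - 1)) (ev P.1 i) (ev P.1 (i + 1))) =
    (if i ≤ t then b (ev Q.1 (i + 1)) (ev Q.1 i) (ev Q.1 (i - 1))
    else b (ev Q.1 (i - 1)) (ev Q.1 i) (ev Q.1 (i + 1))) := by
    intro i hi
    exact congrFun hPQ ⟨i, by omega⟩
  have fwd : ∀ d, t + 1 + d ≤ k → ev P.1 (t + d) = ev Q.1 (t + d) ∧
      ev P.1 (t + d + 1) = ev Q.1 (t + d + 1) := by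
    intro d
    induction d with
    | zero => intro _; exact ⟨hP'.1.trans hQ'.1.symm, hP'.2.trans hQ'.2.symm⟩
    | succ d ih =>
      intro hd
      obtain ⟨e1, e2⟩ := ih (by omega)
      refine ⟨e2, ?_⟩
      have h := hbit (t + d + 1) (by omega)
      rw [if_neg (by omega), if_neg (by omega), Nat.add_sub_cancel, ← e1, ← e2] at h
      have a1 := P.2.1 (t + d) (by omega)
      have a2 := P.2.1 (t + d + 1) (by omega)
      have a3 := Q.2.1 (t + d + 1) (by omega)
      rw [← e2] at a3
      refine hb _ _ _ _ a1.symm a2 a3 ?_ ?_ h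
      · intro h; have := P.2.2 _ _ (by omega) (by omega) h; omega
      · rw [e1]; intro h; have := Q.2.2 _ _ (by omega) (by omega) h; omega
  have bwd : ∀ d, d ≤ t → ev P.1 (t - d) = ev Q.1 (t - d) ∧
      ev P.1 (t - d + 1) = ev Q.1 (t - d + 1) := by
    intro d
    induction d with
    | zero => intro _; exact ⟨hP'.1.trans hQ'.1.symm, hP'.2.trans hQ'.2.symm⟩
    | succ d ih =>
      intro hd
      obtain ⟨e1, e2⟩ := ih (by omega)
      obtain ⟨m, hm⟩ : ∃ m, t - d = m + 1 := ⟨t - d - 1, by omega⟩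
      rw [show t - (d + 1) = m by omega]
      rw [hm] at e1 e2
      refine ⟨?_, e1⟩
      have h := hbit (m + 1) (by omega)
      rw [if_pos (by omega), if_pos (by omega), Nat.add_sub_cancel, ← e1, ← e2] at h
      have a1 := P.2.1 (m + 1) (by omega)
      have a2 := P.2.1 m (by omega)
      have a3 := Q.2.1 m (by omega)
      rw [← e1] at a3
      refine hb _ _ _ _ a1 a2.symm a3.symm ?_ ?_ h
      · intro h; have := P.2.2 _ _ (by omega) (by omega) h; omega
      · rw [e2]; intro h; have := Q.2.2 _ _ (by omega) (by omega) h; omega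
  apply Subtype.ext
  apply ev_ext
  intro i hi
  rcases Nat.lt_or_ge t i with h | h
  · have := (fwd (i - t - 1) (by omega)).2
    rwa [show t + (i - t - 1) + 1 = i by omega] at this
  · have := (bwd (t - i) (by omega)).1
    rwa [show t - (t - i) = i by omega] at this

open Classical in
theorem count_edge {V : Type} [Fintype V] (G : SimpleGraph V) [DecidableRel G.Adj]
    (hG : G.IsRegularOfDegree 3) (k : ℕ) (e : Sym2 V) :
    (Finset.univ.filter (fun P : PathT G k => e ∈ edg P)).card ≤ k * (2 * 2 ^ (k + 1)) := by
  induction e using Sym2.ind with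
  | _ x y =>
  have hsub : Finset.univ.filter (fun P : PathT G k => s(x, y) ∈ edg P) ⊆
      (Finset.range k).biUnion (fun t =>
        Finset.univ.filter (fun P : PathT G k => ev P.1 t = x ∧ ev P.1 (t + 1) = y) ∪
        Finset.univ.filter (fun P : PathT G k => ev P.1 t = y ∧ ev P.1 (t + 1) = x)) := by
    intro P hP
    obtain ⟨i, hi, h⟩ := (mem_edg P _).1 (Finset.mem_filter.1 hP).2
    rw [Sym2.eq_iff] at h
    simp only [Finset.mem_biUnion, Finset.mem_range, Finset.mem_union, Finset.mem_filter,
      Finset.mem_univ, true_and]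
    exact ⟨i, hi, h⟩
  refine (Finset.card_le_card hsub).trans (Finset.card_biUnion_le.trans ?_)
  have : ∀ t ∈ Finset.range k, (Finset.univ.filter
        (fun P : PathT G k => ev P.1 t = x ∧ ev P.1 (t + 1) = y) ∪
        Finset.univ.filter (fun P : PathT G k => ev P.1 t = y ∧ ev P.1 (t + 1) = x)).card
        ≤ 2 * 2 ^ (k + 1) := by
    intro t ht
    have ht := Finset.mem_range.1 ht
    refine (Finset.card_union_le _ _).trans ?_
    have h1 := count_dart G hG ht x y
    have h2 := count_dart G hG ht y x
    omega
  have h2 := Finset.sum_le_card_nsmul _ _ _ this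
  simpa using h2

theorem count_all {V : Type} [Fintype V] (G : SimpleGraph V) [DecidableRel G.Adj]
    (hG : G.IsRegularOfDegree 3) {k : ℕ} (hk : 0 < k) :
    Fintype.card (PathT G k) ≤ 2 * Nat.card G.edgeSet * 2 ^ (k + 1) := by
  classical
  have hd : Fintype.card G.Dart = 2 * Nat.card G.edgeSet := by
    rw [SimpleGraph.dart_card_eq_twice_card_edges, Nat.card_eq_fintype_card,
      ← SimpleGraph.edgeFinset_card]
  rw [← hd, ← Finset.card_univ, ← Finset.card_univ (α := G.Dart)]
  rw [Finset.card_eq_sum_card_fiberwise (f := fun P : PathT G k =>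
    (⟨(ev P.1 0, ev P.1 1), P.2.1 0 hk⟩ : G.Dart)) (t := Finset.univ) (fun _ _ => by simp)]
  refine Finset.sum_le_card_nsmul _ _ _ ?_
  intro d _
  refine le_trans (Finset.card_le_card ?_) (count_dart G hG hk d.toProd.1 d.toProd.2)
  intro P hP
  have h := (Finset.mem_filter.1 hP).2
  simp only [Finset.mem_filter, Finset.mem_univ, true_and]
  rw [← h]
  simp

end Counting

section Single
open Finset

/-- The alphabet of 96 letters. -/
abbrev SS : Type := Fin 48 × Bool

/-- Formal inversion. -/
def sinv (a : SS) : SS := (a.1, !a.2)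

theorem sinv_sinv (a : SS) : sinv (sinv a) = a := by simp [sinv]

theorem sinv_ne (a : SS) : sinv a ≠ a := by
  intro h
  have := congrArg Prod.snd h
  simp [sinv] at this

/-- Orient a letter. -/
def orr {V : Type} (o : V → ℕ) (x y : V) (s : SS) : SS := if o x < o y then s else sinv s

theorem orr_orr {V : Type} (o : V → ℕ) (x y : V) (s : SS) : orr o x y (orr o x y s) = s := by
  unfold orr
  split_ifs <;> simp [sinv_sinv]

theorem orr_inj {V : Type} {o : V → ℕ} {x y : V} {s t : SS} (h : orr o x y s = orr o x y t) :
    s = t := by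
  rw [← orr_orr o x y s, h, orr_orr]

/-- The labelling attached to a function on edges. -/
def lab {V : Type} (o : V → ℕ) (f : Sym2 V → SS) (x y : V) : SS := orr o x y (f s(x, y))

theorem lab_good {V : Type} (K : SimpleGraph V) {o : V → ℕ} (ho : Function.Injective o)
    (f : Sym2 V → SS) : IsGoodLabelling K sinv (lab o f) := by
  intro x y h
  have hne : o x ≠ o y := fun e => h.ne (ho e)
  unfold lab orr
  rw [Sym2.eq_swap (a := y)]
  by_cases h1 : o x < o y
  · rw [if_pos h1, if_neg (by omega)]
  · rw [if_neg h1, if_pos (by omega), sinv_sinv]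

/-- The subgraph of edges belonging to `X`. -/
def KX {V : Type} (G : SimpleGraph V) (X : Finset (Sym2 V)) : SimpleGraph V where
  Adj x y := G.Adj x y ∧ s(x, y) ∈ X
  symm := by
    constructor
    intro x y h
    exact ⟨h.1.symm, by rw [Sym2.eq_swap]; exact h.2⟩
  loopless := by
    constructor
    intro x h
    exact h.1.ne rfl

theorem KX_le {V : Type} (G : SimpleGraph V) (X : Finset (Sym2 V)) : KX G X ≤ G :=
  fun _ _ h => h.1

theorem pth_KX {V : Type} {G : SimpleGraph V} {X : Finset (Sym2 V)} {k : ℕ} (P : PathT G k)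
    (h : edg P ⊆ X) : IsPth (KX G X) k (ev P.1) :=
  ⟨fun i hi => ⟨P.2.1 i hi, h ((mem_edg P _).2 ⟨i, hi, rfl⟩)⟩, P.2.2⟩

theorem extend_reduced {V : Type} [Fintype V] [DecidableEq V] (G : SimpleGraph V)
    [DecidableRel G.Adj]
    (hG : G.IsRegularOfDegree 3) (o : V → ℕ) (X : Finset (Sym2 V)) (e : Sym2 V)
    (f : Sym2 V → SS) (he : e ∉ X) (hR : ReducedLabelling (KX G X) (lab o f)) :
    ∃ Z : Finset SS, Z.card ≤ 4 ∧ ∀ s, s ∉ Z →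
      ReducedLabelling (KX G (insert e X)) (lab o (Function.update f e s)) := by
  induction e using Sym2.ind with
  | _ x y =>
  have hold : ∀ s v u, s(v, u) ≠ s(x, y) →
      lab o (Function.update f s(x, y) s) v u = lab o f v u := by
    intro s v u h
    unfold lab
    rw [Function.update_of_ne h]
  have hnew : ∀ s v u, s(v, u) = s(x, y) →
      lab o (Function.update f s(x, y) s) v u = orr o v u s := by
    intro s v u h
    unfold lab
    rw [h, Function.update_self]
  by_cases hxy : G.Adj x y
  · refine ⟨((G.neighborFinset x).erase y).image (fun u => orr o x y (lab o f x u)) ∪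
      ((G.neighborFinset y).erase x).image (fun u => orr o y x (lab o f y u)), ?_, ?_⟩
    · refine (card_union_le _ _).trans ?_
      have h1 := card_image_le (s := (G.neighborFinset x).erase y)
        (f := fun u => orr o x y (lab o f x u))
      have h2 := card_image_le (s := (G.neighborFinset y).erase x)
        (f := fun u => orr o y x (lab o f y u))
      rw [card_erase_of_mem (by simpa using hxy), SimpleGraph.card_neighborFinset_eq_degree,
        hG] at h1
      rw [card_erase_of_mem (by simpa using hxy.symm),
        SimpleGraph.card_neighborFinset_eq_degree, hG] at h2
      omega
    · intro s hs
      simp only [mem_union, mem_image, mem_erase, SimpleGraph.mem_neighborFinset, not_or,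
        not_exists, not_and] at hs
      obtain ⟨hs1, hs2⟩ := hs
      have key : ∀ v u w, s(v, u) = s(x, y) → G.Adj v w → u ≠ w →
          orr o v u s ≠ lab o f v w := by
        intro v u w h hw huw heq
        rw [Sym2.eq_iff] at h
        rcases h with ⟨rfl, rfl⟩ | ⟨rfl, rfl⟩
        · exact hs1 w ⟨huw.symm, hw⟩ (by rw [← heq, orr_orr])
        · exact hs2 w ⟨huw.symm, hw⟩ (by rw [← heq, orr_orr])
      intro v u w hu hw huw
      by_cases h1 : s(v, u) = s(x, y)
      · have h2 : s(v, w) ≠ s(x, y) := by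
          rw [← h1]
          intro h
          exact huw (Sym2.congr_right.1 h).symm
        rw [hnew _ _ _ h1, hold _ _ _ h2]
        exact key v u w h1 hw.1 huw
      · by_cases h2 : s(v, w) = s(x, y)
        · rw [hnew _ _ _ h2, hold _ _ _ h1]
          exact (key v w u h2 hu.1 huw.symm).symm
        · rw [hold _ _ _ h1, hold _ _ _ h2]
          exact hR v u w ⟨hu.1, (mem_insert.1 hu.2).resolve_left h1⟩
            ⟨hw.1, (mem_insert.1 hw.2).resolve_left h2⟩ huw
  · refine ⟨∅, by simp, fun s _ => ?_⟩
    intro v u w hu hw huw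
    have hn : ∀ a b, G.Adj a b → s(a, b) ≠ s(x, y) := by
      intro a b h h'
      apply hxy
      rwa [← SimpleGraph.mem_edgeSet, ← h', SimpleGraph.mem_edgeSet]
    rw [hold _ _ _ (hn _ _ hu.1), hold _ _ _ (hn _ _ hw.1)]
    exact hR v u w ⟨hu.1, (mem_insert.1 hu.2).resolve_left (hn _ _ hu.1)⟩
            ⟨hw.1, (mem_insert.1 hw.2).resolve_left (hn _ _ hw.1)⟩ huw

open Classical in
theorem sum_bound {V : Type} [Fintype V] (G : SimpleGraph V) [DecidableRel G.Adj]
    (hG : G.IsRegularOfDegree 3) (k : ℕ) (e : Sym2 V) (W : Type) [Fintype W] :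
    ∑ p : PathT G k × W, (if e ∈ edg p.1 then (91 : ℝ) / 91 ^ (edg p.1).card else 0) ≤
      (k * (2 * 2 ^ (k + 1))) * Fintype.card W * (91 / 91 ^ k) := by
  rw [Fintype.sum_prod_type]
  simp only [card_edg, sum_const, card_univ, nsmul_eq_mul]
  rw [← mul_sum, ← sum_filter, sum_const, nsmul_eq_mul]
  have h := count_edge G hG k e
  have h' : ((Finset.univ.filter (fun P : PathT G k => e ∈ edg P)).card : ℝ) ≤
    k * (2 * 2 ^ (k + 1)) := by exact_mod_cast h
  have h3 : (0 : ℝ) ≤ 91 / 91 ^ k := by positivity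
  calc _ = (#{P : PathT G k | e ∈ edg P} : ℝ) * Fintype.card W * (91 / 91 ^ k) := by ring
    _ ≤ _ := by gcongr

theorem single {V : Type} [Fintype V] (G : SimpleGraph V) [DecidableRel G.Adj]
    (hG : G.IsRegularOfDegree 3) (k : ℕ) (hk : 0 < k)
    (hcyc : ∀ v (c : G.Walk v v), c.IsCycle → 2 * k < c.length)
    (m : ℕ) (kk : Fin m → ℕ) (hkk : ∀ a, 0 < kk a) (W : Fin m → Type) [∀ a, Fintype (W a)]
    (wd : ∀ a, W a → ℕ → SS)
    (hsum : (k * (2 * 2 ^ (k + 1))) * Fintype.card (PathT G k) * (91 / 91 ^ k) +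
      ∑ a, ((kk a : ℝ) * (2 * 2 ^ (kk a + 1))) * Fintype.card (W a) * (91 / 91 ^ kk a) ≤ (1 : ℝ)) :
    ∃ L : V → V → SS, IsGoodLabelling G sinv L ∧ ReducedLabelling G L ∧
      (∀ P Q, IsPth G k P → IsPth G k Q →
        (∀ t, t < k → L (P t) (P (t + 1)) = L (Q t) (Q (t + 1))) → ∀ i, i ≤ k → P i = Q i) ∧
      (∀ a w P, IsPth G (kk a) P → ∃ t, t < kk a ∧ L (P t) (P (t + 1)) ≠ wd a w t) := by
  classical
  obtain ⟨o, ho⟩ : ∃ o : V → ℕ, Function.Injective o :=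
    ⟨fun v => (Fintype.equivFin V v : ℕ),
      Fin.val_injective.comp (Fintype.equivFin V).injective⟩
  have hlab : ∀ (f f' : Sym2 V → SS) x y, f s(x, y) = f' s(x, y) →
      lab o f x y = lab o f' x y := by
    intro f f' x y h
    unfold lab
    rw [h]
  have hrestr : ∀ (f : Sym2 V → SS) (Y : Finset (Sym2 V)) x y, s(x, y) ∈ Y →
      lab o (restr ((0, true) : SS) f Y) x y = lab o f x y := by
    intro f Y x y h
    apply hlab
    simp [restr, h]
  let ι := (PathT G k × PathT G k) ⊕ (Σ a : Fin m, PathT G (kk a) × W a)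
  let D : ι → Finset (Sym2 V) := Sum.elim (fun p => edg p.1) (fun q => edg q.2.1)
  let sc : ι → Finset (Sym2 V) :=
    Sum.elim (fun p => edg p.1 ∪ edg p.2) (fun q => edg q.2.1)
  let Bad : ι → (Sym2 V → SS) → Prop := Sum.elim
    (fun p f => p.1 ≠ p.2 ∧ ∀ t, t < k → lab o f (ev p.1.1 t) (ev p.1.1 (t + 1)) =
      lab o f (ev p.2.1 t) (ev p.2.1 (t + 1)))
    (fun q f => ∀ t, t < kk q.1 → lab o f (ev q.2.1.1 t) (ev q.2.1.1 (t + 1)) =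
      wd q.1 q.2.2 t)
  obtain ⟨f, hf, hbad⟩ := rosenfeld (E := Sym2 V) (S := SS) (ι := ι) (0, true) (by simp)
    (fun X f => ReducedLabelling (KX G X) (lab o f)) D sc Bad
    (by rintro (p | q) <;> simp [D, sc])
    (by
      rintro (p | q)
      · apply card_pos.1
        simp only [D, Sum.elim_inl, card_edg]
        exact hk
      · apply card_pos.1
        simp only [D, Sum.elim_inr, card_edg]
        exact hkk _)
    (by
      intro v u w hu
      simp [KX] at hu)
    (by
      intro X Y f hXY hX v u w hu hw huw
      rw [hrestr _ _ _ _ hu.2, hrestr _ _ _ _ hw.2]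
      exact hX v u w ⟨hu.1, hXY hu.2⟩ ⟨hw.1, hXY hw.2⟩ huw)
    (by
      rintro (⟨P, Q⟩ | ⟨a, P, w⟩) Y f hY
      · simp only [sc, Sum.elim_inl, union_subset_iff] at hY
        simp only [Bad, Sum.elim_inl]
        refine and_congr_right fun _ => forall₂_congr fun t ht => ?_
        rw [hrestr _ _ _ _ (hY.1 ((mem_edg P _).2 ⟨t, ht, rfl⟩)),
          hrestr _ _ _ _ (hY.2 ((mem_edg Q _).2 ⟨t, ht, rfl⟩))]
      · simp only [sc, Sum.elim_inr] at hY
        simp only [Bad, Sum.elim_inr]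
        refine forall₂_congr fun t ht => ?_
        rw [hrestr _ _ _ _ (hY ((mem_edg P _).2 ⟨t, ht, rfl⟩))])
    (fun X e f he hR => extend_reduced G hG o X e f he hR)
    (by
      have fin : ∀ (n : ℕ) (P : PathT G n) (f f' : Sym2 V → SS),
          (∀ x, x ∉ edg P → f x = f' x) →
          (∀ t, t < n → lab o f (ev P.1 t) (ev P.1 (t + 1)) =
            lab o f' (ev P.1 t) (ev P.1 (t + 1))) → f = f' := by
        intro n P f f' h1 h2
        funext e
        by_cases he : e ∈ edg P
        · obtain ⟨i, hi, rfl⟩ := (mem_edg P e).1 he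
          exact orr_inj (h2 i hi)
        · exact h1 e he
      rintro (⟨P, Q⟩ | ⟨a, P, w⟩) X f f' hR hR' hX hB hB' hag
      · simp only [sc, Sum.elim_inl, union_subset_iff] at hX
        simp only [Bad, Sum.elim_inl] at hB hB'
        simp only [D, Sum.elim_inl] at hag
        refine fin k P f f' hag ?_
        refine det_lemma (K := KX G X) sinv_ne ?_ (lab_good _ ho f) hR (lab_good _ ho f')
          (pth_KX P hX.1) (pth_KX Q hX.2) ?_ hB.2 hB'.2 ?_
        · intro v c hc
          have := hcyc v _ (hc.mapLe (KX_le G X))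
          simpa using this
        · by_contra hcon
          push Not at hcon
          exact hB.1 (Subtype.ext (ev_ext hcon))
        · intro t ht hne
          apply hlab
          apply hag
          intro hmem
          obtain ⟨i, hi, h⟩ := (mem_edg P _).1 hmem
          exact hne i hi h.symm
      · simp only [Bad, Sum.elim_inr] at hB hB'
        simp only [D, Sum.elim_inr] at hag
        refine fin _ P f f' hag fun t ht => ?_
        rw [hB t ht, hB' t ht])
    (by
      rintro (⟨P, Q⟩ | ⟨a, P, w⟩) e he
      · simp only [sc, Sum.elim_inl, mem_union] at he
        rcases he with he | he
        · exact ⟨Sum.inl (P, Q), he, rfl, fun _ h => h⟩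
        · refine ⟨Sum.inl (Q, P), he, by simp only [sc, Sum.elim_inl, union_comm], ?_⟩
          intro f h
          exact ⟨h.1.symm, fun t ht => (h.2 t ht).symm⟩
      · exact ⟨Sum.inr ⟨a, P, w⟩, he, rfl, fun _ h => h⟩)
    (by
      intro e
      refine le_trans ?_ hsum
      rw [sum_filter, Fintype.sum_sum_type, Fintype.sum_sigma]
      simp only [D, Sum.elim_inl, Sum.elim_inr]
      refine add_le_add ?_ (sum_le_sum fun a _ => ?_)
      · refine le_trans (le_of_eq (sum_congr rfl fun p _ => ?_))
          (sum_bound G hG k e (PathT G k))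
        by_cases hh : e ∈ edg p.1 <;> simp only [hh, if_true, if_false]
      · refine le_trans (le_of_eq (sum_congr rfl fun p _ => ?_))
          (sum_bound G hG (kk a) e (W a))
        by_cases hh : e ∈ edg p.1 <;> simp only [hh, if_true, if_false])
  have hK : ∀ x y, G.Adj x y → (KX G univ).Adj x y := fun x y h => ⟨h, mem_univ _⟩
  refine ⟨lab o f, lab_good _ ho f, fun v u w hu hw => hf v u w (hK _ _ hu) (hK _ _ hw), ?_, ?_⟩
  · intro P Q hP hQ hw
    by_contra hcon
    refine hbad (Sum.inl (⟨_, hP.ev_of⟩, ⟨_, hQ.ev_of⟩)) ⟨?_, ?_⟩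
    · intro h
      apply hcon
      intro i hi
      have := congrArg (fun R : PathT G k => ev R.1 i) h
      simpa only [ev_of P hi, ev_of Q hi] using this
    · intro t ht
      simp only
      rw [ev_of P (by omega), ev_of P (by omega), ev_of Q (by omega), ev_of Q (by omega)]
      exact hw t ht
  · intro a w P hP
    by_contra hcon
    push Not at hcon
    refine hbad (Sum.inr ⟨a, ⟨_, hP.ev_of⟩, w⟩) ?_
    intro t ht
    simp only at ht ⊢
    rw [ev_of P (by omega), ev_of P (by omega)]
    exact hcon t ht

end Single

section Main
open Finset

/-- Recursion with access to all previous values. -/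
def recSeq {α : ℕ → Type} (F : ∀ j, (∀ i : Fin j, α i) → α j) (n : ℕ) : α n :=
  F n (fun i => recSeq F i)
termination_by n
decreasing_by exact i.2

/-- The ratio governing the sum. -/
noncomputable def rho : ℝ := 4 * (2 : ℝ) ^ (9 / 2 : ℝ) / 91

theorem rho_nonneg : 0 ≤ rho := by unfold rho; positivity

theorem rho_lt_one : rho < 1 := by
  have h : ((2 : ℝ) ^ (9 / 2 : ℝ)) ^ 2 = 512 := by
    rw [← Real.rpow_natCast, ← Real.rpow_mul (by norm_num)]
    norm_num
  have h0 : 0 ≤ (2 : ℝ) ^ (9 / 2 : ℝ) := by positivity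
  unfold rho
  rw [div_lt_one (by norm_num)]
  nlinarith

theorem term_bound {V : Type} [Fintype V] (G : SimpleGraph V) [DecidableRel G.Adj]
    (hG : G.IsRegularOfDegree 3) {g k : ℕ} (hk : 0 < k) (hgk : g ≤ 6 * k + 5)
    (hE : (Nat.card G.edgeSet : ℝ) ≤ (3 / 2) * (2 : ℝ) ^ ((3 * (g : ℝ) + 6) / 4)) :
    ((k : ℝ) * (2 * 2 ^ (k + 1))) * Fintype.card (PathT G k) * (91 / 91 ^ k) ≤
      139776 * ((k : ℝ) ^ 1 * rho ^ k) := by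
  have h1 : (Fintype.card (PathT G k) : ℝ) ≤ 2 * Nat.card G.edgeSet * 2 ^ (k + 1) := by
    exact_mod_cast count_all G hG hk
  have h2 : (2 : ℝ) ^ ((3 * (g : ℝ) + 6) / 4) ≤ 64 * ((2 : ℝ) ^ (9 / 2 : ℝ)) ^ k := by
    have hg : (g : ℝ) ≤ 6 * k + 5 := by exact_mod_cast hgk
    have e : 64 * ((2 : ℝ) ^ (9 / 2 : ℝ)) ^ k = (2 : ℝ) ^ ((6 : ℝ) + 9 / 2 * k) := by
      rw [Real.rpow_add (by norm_num), Real.rpow_mul (by norm_num), Real.rpow_natCast]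
      norm_num
    rw [e]
    apply Real.rpow_le_rpow_of_exponent_le (by norm_num)
    linarith
  have h3 : (Fintype.card (PathT G k) : ℝ) ≤
      2 * ((3 / 2) * (64 * ((2 : ℝ) ^ (9 / 2 : ℝ)) ^ k)) * 2 ^ (k + 1) := by
    refine h1.trans ?_
    have := hE.trans (mul_le_mul_of_nonneg_left h2 (by norm_num))
    gcongr
  calc ((k : ℝ) * (2 * 2 ^ (k + 1))) * Fintype.card (PathT G k) * (91 / 91 ^ k)
      ≤ ((k : ℝ) * (2 * 2 ^ (k + 1))) *
        (2 * ((3 / 2) * (64 * ((2 : ℝ) ^ (9 / 2 : ℝ)) ^ k)) * 2 ^ (k + 1)) * (91 / 91 ^ k) := by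
        gcongr
    _ = 139776 * ((k : ℝ) ^ 1 * rho ^ k) := by
        unfold rho
        rw [div_pow, mul_pow, show (4 : ℝ) = 2 * 2 by norm_num, mul_pow, pow_succ, pow_one]
        ring

theorem exists_threshold : ∃ N : ℕ, ∀ s : Finset ℕ, (∀ k ∈ s, N ≤ k) →
    ∑ k ∈ s, 139776 * ((k : ℝ) ^ 1 * rho ^ k) ≤ 1 := by
  have hs : Summable (fun k : ℕ => 139776 * ((k : ℝ) ^ 1 * rho ^ k)) := by
    apply Summable.mul_left
    apply summable_pow_mul_geometric_of_norm_lt_one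
    rw [Real.norm_eq_abs, abs_of_nonneg rho_nonneg]
    exact rho_lt_one
  obtain ⟨s, hs⟩ := summable_iff_vanishing_norm.1 hs 1 one_pos
  refine ⟨s.sup id + 1, fun t ht => ?_⟩
  refine (le_abs_self _).trans (le_of_lt (hs t ?_))
  rw [Finset.disjoint_left]
  intro a ha ha'
  have h1 := ht a ha
  have h2 : a ≤ s.sup id := Finset.le_sup (f := id) ha'
  omega

theorem word_getVert {V S : Type} {G : SimpleGraph V} (ℓ : V → V → S) {u v : V}
    (p : G.Walk u v) : (walkWord ℓ p).length = p.length ∧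
    ∀ t (ht : t < (walkWord ℓ p).length),
      (walkWord ℓ p)[t] = ℓ (p.getVert t) (p.getVert (t + 1)) := by
  refine ⟨by simp [walkWord], ?_⟩
  intro t ht
  have ht' : t < p.darts.length := by simpa [walkWord] using ht
  simp only [walkWord, List.getElem_map]
  rw [SimpleGraph.Walk.darts_getElem_eq_getVert]

theorem word_eq {V V' S : Type} {G : SimpleGraph V} {G' : SimpleGraph V'} {ℓ : V → V → S}
    {ℓ' : V' → V' → S} {u v : V} {x y : V'} {p : G.Walk u v} {q : G'.Walk x y}
    (h : walkWord ℓ p = walkWord ℓ' q) : p.length = q.length ∧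
    ∀ t, t < p.length → ℓ (p.getVert t) (p.getVert (t + 1)) =
      ℓ' (q.getVert t) (q.getVert (t + 1)) := by
  obtain ⟨a1, a2⟩ := word_getVert ℓ p
  obtain ⟨b1, b2⟩ := word_getVert ℓ' q
  refine ⟨by rw [← a1, ← b1, h], fun t ht => ?_⟩
  rw [← a2 t (by omega), ← b2 t (by rw [← h]; omega)]
  simp only [h]

theorem isPth_getVert {V : Type} {G : SimpleGraph V} {u v : V} {p : G.Walk u v}
    (hp : p.IsPath) : IsPth G p.length p.getVert :=
  ⟨fun i hi => p.adj_getVert_succ hi, fun _ _ hi hj h => hp.getVert_injOn hi hj h⟩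

end Main

theorem statement16 :
    ∃ g₀ : ℕ, ∀ (V : ℕ → Type) [∀ n, Fintype (V n)]
      (G : ∀ n, SimpleGraph (V n)) [∀ n, DecidableRel (G n).Adj],
      (∀ n, (G n).IsRegularOfDegree 3) →
      g₀ ≤ (G 0).girth →
      Filter.Tendsto (fun n => (G n).girth) Filter.atTop Filter.atTop →
      (∀ n, ((G n).diam : ℝ) ≤ (3 / 2) * ((G n).girth : ℝ) + 5) →
      (∀ n, (Nat.card (G n).edgeSet : ℝ) ≤
        (3 / 2) * (2 : ℝ) ^ ((3 * ((G n).girth : ℝ) + 6) / 4)) →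
      (∀ n, 1 < (G n).girth / 6) →
      (∀ n, (G n).girth / 6 < (G (n + 1)).girth / 6) →
      ∃ (S : Type) (_ : Fintype S) (inv : S → S),
        Nat.card S = 96 ∧ Function.Involutive inv ∧ (∀ a, inv a ≠ a) ∧
        ∃ ℓ : ∀ n, V n → V n → S, SmallCancellation V G inv ℓ (1 / 6 : ℝ) := by
  obtain ⟨N, hN⟩ := exists_threshold
  refine ⟨6 * N, ?_⟩
  intro V _ G _ hreg hg0 _ _ hE hk1 hkmono
  obtain ⟨k, hkdef⟩ : ∃ k : ℕ → ℕ, ∀ n, k n = (G n).girth / 6 := ⟨_, fun _ => rfl⟩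
  have hmono : StrictMono k := strictMono_nat_of_lt_succ (fun n => by
    rw [hkdef, hkdef]; exact hkmono n)
  have hkpos : ∀ n, 0 < k n := fun n => by have := hk1 n; rw [hkdef]; omega
  have hkN : ∀ n, N ≤ k n := fun n => by
    have h1 := hmono.monotone (Nat.zero_le n)
    have h2 := hkdef 0
    omega
  have hcyc : ∀ n v (c : (G n).Walk v v), c.IsCycle → 2 * k n < c.length := by
    intro n v c hc
    have h1 := hc.girth_le_length
    have h2 := hkdef n
    have h3 := hkpos n
    omega
  have hterm : ∀ n, ((k n : ℝ) * (2 * 2 ^ (k n + 1))) * Fintype.card (PathT (G n) (k n)) *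
      (91 / 91 ^ (k n)) ≤ 139776 * ((k n : ℝ) ^ 1 * rho ^ (k n)) := fun n =>
    term_bound (G n) (hreg n) (hkpos n) (by have := hkdef n; omega) (hE n)
  have hstep : ∀ (j : ℕ) (prev : ∀ i : Fin j, V i → V i → SS), ∃ L : V j → V j → SS,
      IsGoodLabelling (G j) sinv L ∧ ReducedLabelling (G j) L ∧
      (∀ P Q, IsPth (G j) (k j) P → IsPth (G j) (k j) Q →
        (∀ t, t < k j → L (P t) (P (t + 1)) = L (Q t) (Q (t + 1))) →
          ∀ i, i ≤ k j → P i = Q i) ∧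
      (∀ (a : Fin j) (w : PathT (G a) (k a)) P, IsPth (G j) (k a) P →
        ∃ t, t < k a ∧ L (P t) (P (t + 1)) ≠ prev a (ev w.1 t) (ev w.1 (t + 1))) := by
    intro j prev
    refine single (G j) (hreg j) (k j) (hkpos j) (hcyc j) j (fun a => k a)
      (fun a => hkpos a) (fun a => PathT (G a) (k a))
      (fun a w t => prev a (ev w.1 t) (ev w.1 (t + 1))) ?_
    have h1 : ∑ n ∈ Finset.range (j + 1), 139776 * ((k n : ℝ) ^ 1 * rho ^ (k n)) ≤ 1 := by
      have := hN ((Finset.range (j + 1)).image k) (by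
        intro x hx
        obtain ⟨n, _, rfl⟩ := Finset.mem_image.1 hx
        exact hkN n)
      rwa [Finset.sum_image (fun a _ b _ h => hmono.injective h)] at this
    refine le_trans ?_ h1
    rw [Finset.sum_range_succ, add_comm,
      ← Fin.sum_univ_eq_sum_range (fun n => 139776 * ((k n : ℝ) ^ 1 * rho ^ (k n)))]
    exact add_le_add (Finset.sum_le_sum fun a _ => hterm a) (hterm j)
  choose F hF using hstep
  obtain ⟨ℓ, hℓ⟩ : ∃ ℓ : ∀ n, V n → V n → SS, ∀ j, ℓ j = F j (fun i => ℓ i) :=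
    ⟨recSeq (α := fun n => V n → V n → SS) F, fun j => by rw [recSeq]⟩
  have hgood : ∀ j, IsGoodLabelling (G j) sinv (ℓ j) := fun j => by
    rw [hℓ j]; exact (hF j _).1
  have hred : ∀ j, ReducedLabelling (G j) (ℓ j) := fun j => by
    rw [hℓ j]; exact (hF j _).2.1
  have hself : ∀ j P Q, IsPth (G j) (k j) P → IsPth (G j) (k j) Q →
        (∀ t, t < k j → ℓ j (P t) (P (t + 1)) = ℓ j (Q t) (Q (t + 1))) →
          ∀ i, i ≤ k j → P i = Q i := fun j => by
    rw [hℓ j]; exact (hF j _).2.2.1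
  have hcross : ∀ i j, i < j → ∀ P Q, IsPth (G i) (k i) P → IsPth (G j) (k i) Q →
      ¬ ∀ t, t < k i → ℓ i (P t) (P (t + 1)) = ℓ j (Q t) (Q (t + 1)) := by
    intro i j hij P Q hP hQ hall
    obtain ⟨t, ht, hne⟩ := (hF j (fun i => ℓ i)).2.2.2 ⟨i, hij⟩ ⟨_, hP.ev_of⟩ Q hQ
    simp only at ht hne
    rw [ev_of P (by omega), ev_of P (by omega), ← hℓ j] at hne
    exact hne (hall t ht).symm
  refine ⟨SS, inferInstance, sinv, by simp, sinv_sinv, sinv_ne, ℓ, hgood, hred, ?_⟩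
  intro i j u v p x y q hp hq hlen hw
  obtain ⟨hl, hw⟩ := word_eq hw
  have hP := isPth_getVert hp
  have hQ := isPth_getVert hq
  rw [← hl] at hQ
  have hki : k i ≤ p.length := by
    have h1 : ((G i).girth : ℝ) ≤ 6 * (p.length : ℝ) := by linarith
    have h2 : (G i).girth ≤ 6 * p.length := by exact_mod_cast h1
    have := hkdef i
    omega
  rcases lt_trichotomy i j with hij | hij | hij
  · exact absurd (fun t ht => hw t (by omega)) (hcross i j hij _ _ (hP.le hki) (hQ.le hki))
  · subst hij
    have h0 := hself i _ _ (hP.le hki) (hQ.le hki) (fun t ht => hw t (by omega)) 0 (by omega)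
    have hall := pth_eq_of_dart (hgood i) (hred i) hP hQ hw (Nat.zero_le _) h0
    have hu : u = x := by simpa using h0
    have hv : v = y := by
      have := hall p.length le_rfl
      rw [SimpleGraph.Walk.getVert_length, hl, SimpleGraph.Walk.getVert_length] at this
      exact this
    subst hu
    subst hv
    have : p = q := SimpleGraph.Walk.ext_getVert_le_length hl (fun t ht => hall t ht)
    rw [this]
  · have hkj : k j ≤ p.length := (hmono hij).le.trans hki
    exact absurd (fun t ht => (hw t (by omega)).symm)
      (hcross j i hij _ _ (hQ.le hkj) (hP.le hkj))
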